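/- Let G(x,y,t) := Γ_N(x−y,t) − Γ_N(x−y*,t) + H(x,y,t) with H as above. Then for every y in the closed upper half-space Ω̄ and every t > 0, ∫_Ω G(x,y,t) dx + ∫_{∂Ω} G(x,y,t) dσ(x) = 1. -/

import Mathlib

open Real MeasureTheory Set

/-- The `N`-dimensional Gauss kernel `Γ_N(x,t) = (4πt)^{-N/2} e^{-|x|²/(4t)}`. -/
noncomputable def gauss (N : ℕ) (x : Fin N → ℝ) (t : ℝ) : ℝ :=
  (4 * π * t) ^ (-(N : ℝ) / 2) * Real.exp (-(∑ i, x i ^ 2) / (4 * t))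

/-- Reflection `y* = (y', -y_N)` across the boundary of the half-space. -/
noncomputable def ystar (N : ℕ) (y : Fin (N + 1) → ℝ) : Fin (N + 1) → ℝ :=
  Function.update y (Fin.last N) (-(y (Fin.last N)))

/-- The last unit vector `e_N`. -/
noncomputable def eN (N : ℕ) : Fin (N + 1) → ℝ := Pi.single (Fin.last N) 1

/-- `H(x,y,t) = ∫_0^t (4π(t-τ))^{-N/2} ((x_N+y_N+τ)/(t-τ)) e^{-|x-y*+τe_N|²/(4(t-τ))} dτ`. -/
noncomputable def Hexp (N : ℕ) (x y : Fin (N + 1) → ℝ) (t : ℝ) : ℝ :=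
  ∫ τ in (0 : ℝ)..t,
    (4 * π * (t - τ)) ^ (-((N : ℝ) + 1) / 2) *
      ((x (Fin.last N) + y (Fin.last N) + τ) / (t - τ)) *
      Real.exp (-(∑ i, (x i - ystar N y i + τ * eN N i) ^ 2) / (4 * (t - τ)))

/-- The fundamental solution `G(x,y,t) = Γ_N(x-y,t) - Γ_N(x-y*,t) + H(x,y,t)`. -/
noncomputable def Gker (N : ℕ) (x y : Fin (N + 1) → ℝ) (t : ℝ) : ℝ :=
  gauss (N + 1) (x - y) t - gauss (N + 1) (x - ystar N y) t + Hexp N x y t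

open Filter Topology

/-!
Write `K` for the one-dimensional heat kernel, `P(z,s) = (z/s) K(z,s)`, and `D(z,s)` for the error
function of `z / (2√s)`, which solves the heat equation with initial datum `sign z`; then
`∂_z K = -P/2`, `∂_z D = 2K` and `∂_s D = -P`. The kernel `G` is a sum of products of a function of
`x_N` with a Gauss kernel of unit mass in `x'`, so only the mass in the normal direction matters,
measured by `dz` on `(0,∞)` plus a unit mass at `0`. The difference of the two Gauss kernels has
mass `D(y_N,t)`. The integrand of `H` at time `τ` has mass `2K + P`, evaluated at `(y_N+τ,t-τ)`;
this is the derivative of `τ ↦ D(y_N+τ,t-τ)`, which increases from `D(y_N,t)` at `τ = 0` to `1` as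
`τ → t`. The two masses therefore add up to `1`.
-/

section Calculus

lemma integrableOn_Ioo_deriv_of_nonneg_of_tendsto {f f' : ℝ → ℝ} {a b fa fb : ℝ}
    (hderiv : ∀ x ∈ Ioo a b, HasDerivAt f (f' x) x) (hpos : ∀ x ∈ Ioo a b, 0 ≤ f' x)
    (ha : Tendsto f (𝓝[>] a) (𝓝 fa)) (hb : Tendsto f (𝓝[<] b) (𝓝 fb)) :
    IntegrableOn f' (Ioo a b) := by
  have hcont : ContinuousOn f (Ioo a b) := fun x hx => (hderiv x hx).continuousAt.continuousWithinAt
  have heq : EqOn (extendFrom (Ioo a b) f) f (Ioo a b) := fun x hx =>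
    extendFrom_extends hcont x hx
  refine (intervalIntegral.integrableOn_deriv_of_nonneg
    (continuousOn_Icc_extendFrom_Ioo hcont ha hb) (fun x hx => ?_) hpos).mono_set
    Ioo_subset_Ioc_self
  exact (hderiv x hx).congr_of_eventuallyEq (heq.eventuallyEq_of_mem (Ioo_mem_nhds hx.1 hx.2))

lemma integrable_uncurry_of_nonneg {α β : Type*} [MeasurableSpace α] [MeasurableSpace β]
    {μ : Measure α} {ν : Measure β} [SFinite ν] {f : α → β → ℝ}
    (hf : AEStronglyMeasurable (Function.uncurry f) (μ.prod ν))
    (hpos : ∀ᵐ a ∂μ, 0 ≤ᵐ[ν] f a) (hf_int : ∀ᵐ a ∂μ, Integrable (f a) ν)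
    (hf_int' : Integrable (fun a => ∫ b, f a b ∂ν) μ) :
    Integrable (Function.uncurry f) (μ.prod ν) := by
  refine (integrable_prod_iff hf).2 ⟨hf_int, hf_int'.congr ?_⟩
  filter_upwards [hpos] with a ha
  refine integral_congr_ae ?_
  filter_upwards [ha] with b hb
  exact (Real.norm_of_nonneg hb).symm

end Calculus

section ErrorFunction

/-- The error function `erf u = (2/√π) ∫_0^u e^{-v²} dv`. -/
noncomputable def errorFn (u : ℝ) : ℝ := ∫ v in (0 : ℝ)..u, 2 / √π * Real.exp (-v ^ 2)

lemma hasDerivAt_errorFn (u : ℝ) : HasDerivAt errorFn (2 / √π * Real.exp (-u ^ 2)) u :=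
  (Continuous.integral_hasStrictDerivAt (by fun_prop) 0 u).hasDerivAt

lemma errorFn_neg (u : ℝ) : errorFn (-u) = -errorFn u := by
  have h := intervalIntegral.integral_comp_neg (a := 0) (b := u)
    (fun v : ℝ => 2 / √π * Real.exp (-v ^ 2))
  simp only [neg_sq, neg_zero] at h
  rw [errorFn, errorFn, intervalIntegral.integral_symm, ← h]

lemma tendsto_errorFn_atTop : Tendsto errorFn atTop (𝓝 1) := by
  have hf_int : Integrable fun v : ℝ => 2 / √π * Real.exp (-v ^ 2) := by
    simpa using (integrable_exp_neg_mul_sq (b := 1) one_pos).const_mul (2 / √π)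
  have hval : ∫ v in Ioi (0 : ℝ), 2 / √π * Real.exp (-v ^ 2) = 1 := by
    have h := integral_gaussian_Ioi 1
    simp only [neg_mul, one_mul, div_one] at h
    rw [integral_const_mul, h]
    field_simp
  exact hval ▸ intervalIntegral_tendsto_integral_Ioi 0 hf_int.integrableOn tendsto_id

end ErrorFunction

section HeatKernel

/-- The one-dimensional heat kernel, the Gauss kernel of a single variable. -/
noncomputable def heatKernel (z s : ℝ) : ℝ := (√(4 * π * s))⁻¹ * Real.exp (-z ^ 2 / (4 * s))

/-- The Poisson kernel of the heat equation on the half-line with Dirichlet boundary condition,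
that is, the density in `s` of the time at which the diffusion with generator `∂_z²` started at
`z > 0` reaches `0`. -/
noncomputable def heatPoissonKernel (z s : ℝ) : ℝ := heatKernel z s * (z / s)

lemma heatKernel_nonneg (z s : ℝ) : 0 ≤ heatKernel z s := by
  unfold heatKernel; positivity

lemma heatPoissonKernel_nonneg {z s : ℝ} (hz : 0 ≤ z) (hs : 0 ≤ s) : 0 ≤ heatPoissonKernel z s :=
  mul_nonneg (heatKernel_nonneg z s) (div_nonneg hz hs)

lemma heatKernel_neg (z s : ℝ) : heatKernel (-z) s = heatKernel z s := by
  simp only [heatKernel, neg_sq]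

lemma heatKernel_eq_gaussianPDFReal (z : ℝ) {s : ℝ} (hs : 0 ≤ s) :
    heatKernel z s = ProbabilityTheory.gaussianPDFReal 0 (2 * s).toNNReal z := by
  rw [heatKernel, ProbabilityTheory.gaussianPDFReal, Real.coe_toNNReal _ (by positivity), sub_zero]
  ring_nf

variable {s : ℝ}

lemma integrable_heatKernel (hs : 0 < s) : Integrable fun z => heatKernel z s := by
  simpa only [heatKernel_eq_gaussianPDFReal _ hs.le] using
    ProbabilityTheory.integrable_gaussianPDFReal 0 (2 * s).toNNReal

lemma integral_heatKernel (hs : 0 < s) : ∫ z, heatKernel z s = 1 := by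
  simpa only [heatKernel_eq_gaussianPDFReal _ hs.le] using
    ProbabilityTheory.integral_gaussianPDFReal_eq_one 0 (Real.toNNReal_pos.2 (by positivity)).ne'

lemma integrable_heatPoissonKernel (hs : 0 < s) : Integrable fun z => heatPoissonKernel z s := by
  convert (integrable_mul_exp_neg_mul_sq (b := 1 / (4 * s)) (by positivity)).const_mul
    ((√(4 * π * s))⁻¹ / s) using 2 with z
  rw [heatPoissonKernel, heatKernel, show -z ^ 2 / (4 * s) = -(1 / (4 * s)) * z ^ 2 by ring]
  ring

lemma hasDerivAt_heatKernel (z s : ℝ) :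
    HasDerivAt (fun z => heatKernel z s) (-heatPoissonKernel z s / 2) z := by
  have hexp : HasDerivAt (fun z : ℝ => -z ^ 2 / (4 * s)) (-(2 * z) / (4 * s)) z := by
    simpa using (hasDerivAt_pow 2 z).neg.div_const (4 * s)
  refine (hexp.exp.const_mul (√(4 * π * s))⁻¹).congr_deriv ?_
  rw [heatPoissonKernel, heatKernel]
  ring

lemma tendsto_heatKernel_atTop (hs : 0 < s) : Tendsto (fun z => heatKernel z s) atTop (𝓝 0) := by
  have h : Tendsto (fun z : ℝ => -z ^ 2 / (4 * s)) atTop atBot := by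
    simp only [neg_div]
    exact tendsto_neg_atTop_atBot.comp
      ((tendsto_pow_atTop two_ne_zero).atTop_div_const (by positivity))
  simpa [heatKernel] using (Real.tendsto_exp_atBot.comp h).const_mul (√(4 * π * s))⁻¹

lemma heatKernel_eq_exp_neg_sq (z : ℝ) (hs : 0 ≤ s) :
    heatKernel z s = (2 * √π * √s)⁻¹ * Real.exp (-(z / (2 * √s)) ^ 2) := by
  rw [heatKernel, Real.sqrt_mul (by positivity), Real.sqrt_mul (by positivity),
    show (4 : ℝ) = 2 ^ 2 by norm_num, Real.sqrt_sq zero_le_two, div_pow, mul_pow, Real.sq_sqrt hs,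
    neg_div]

/-- The solution `erf (z / (2√s))` of the one-dimensional heat equation with initial datum
`sign z`. By the conventions for division, it vanishes for `s ≤ 0`. -/
noncomputable def diffusedSign (z s : ℝ) : ℝ := errorFn (z / (2 * √s))

lemma diffusedSign_neg (z s : ℝ) : diffusedSign (-z) s = -diffusedSign z s := by
  rw [diffusedSign, neg_div, errorFn_neg, diffusedSign]

lemma hasDerivAt_diffusedSign_comp {z s : ℝ → ℝ} {z' s' τ : ℝ} (hz : HasDerivAt z z' τ)
    (hs : HasDerivAt s s' τ) (hpos : 0 < s τ) :
    HasDerivAt (fun τ => diffusedSign (z τ) (s τ))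
      (2 * heatKernel (z τ) (s τ) * z' - heatPoissonKernel (z τ) (s τ) * s') τ := by
  have hsqrt : 0 < √(s τ) := Real.sqrt_pos.2 hpos
  have hquot := hz.div ((hs.sqrt hpos.ne').const_mul 2) (by positivity)
  refine ((hasDerivAt_errorFn _).comp τ hquot).congr_deriv ?_
  have hsq : s τ = √(s τ) ^ 2 := (Real.sq_sqrt hpos.le).symm
  rw [heatPoissonKernel, heatKernel_eq_exp_neg_sq _ hpos.le]
  simp only [Pi.div_apply]
  generalize √(s τ) = q at *
  rw [hsq]
  field_simp

lemma tendsto_diffusedSign_atTop (hs : 0 < s) :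
    Tendsto (fun z => diffusedSign z s) atTop (𝓝 1) :=
  tendsto_errorFn_atTop.comp (tendsto_id.atTop_div_const (by positivity))

lemma tendsto_diffusedSign_of_pos {α : Type*} {l : Filter α} {z s : α → ℝ} {z₀ : ℝ} (hz₀ : 0 < z₀)
    (hz : Tendsto z l (𝓝 z₀)) (hs : Tendsto s l (𝓝[>] 0)) :
    Tendsto (fun a => diffusedSign (z a) (s a)) l (𝓝 1) := by
  have hsqrt : Tendsto (fun s => 2 * √s) (𝓝[>] 0) (𝓝[>] 0) := by
    refine tendsto_nhdsWithin_iff.2 ⟨?_, ?_⟩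
    · have hcont : Continuous fun s => 2 * √s := by fun_prop
      simpa using (hcont.tendsto 0).mono_left nhdsWithin_le_nhds
    · filter_upwards [self_mem_nhdsWithin] with s hs
      exact mul_pos two_pos (Real.sqrt_pos.2 hs)
  exact tendsto_errorFn_atTop.comp
    (hz.pos_mul_atTop hz₀ ((tendsto_inv_nhdsGT_zero.comp hsqrt).comp hs))

end HeatKernel

section NormalDirection

/-- Lebesgue measure on the open half-line plus a unit mass at its endpoint: the normal factor of
the measure `dx` on `Ω` plus `dσ` on `∂Ω`. -/
noncomputable abbrev halfLineMeasure : Measure ℝ := volume.restrict (Ioi 0) + Measure.dirac 0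

lemma ae_halfLineMeasure_nonneg : ∀ᵐ z ∂halfLineMeasure, 0 ≤ z := by
  refine ae_add_measure_iff.2 ⟨?_, ?_⟩
  · filter_upwards [ae_restrict_mem measurableSet_Ioi] with z hz using le_of_lt hz
  · rw [ae_dirac_iff measurableSet_Ici]

variable {E : Type*} [NormedAddCommGroup E] {f : ℝ → E}

lemma integrable_halfLineMeasure (hf : IntegrableOn f (Ioi 0)) :
    Integrable f halfLineMeasure :=
  integrable_add_measure.2 ⟨hf, integrable_dirac (by finiteness)⟩

lemma integral_halfLineMeasure [NormedSpace ℝ E] [CompleteSpace E] (hf : IntegrableOn f (Ioi 0)) :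
    ∫ z, f z ∂halfLineMeasure = (∫ z in Ioi 0, f z) + f 0 := by
  rw [integral_add_measure hf (integrable_dirac (by finiteness)), integral_dirac]

variable {s : ℝ}

lemma integrable_heatPoissonKernel_halfLineMeasure (a : ℝ) (hs : 0 < s) :
    Integrable (fun z => heatPoissonKernel (z + a) s) halfLineMeasure :=
  integrable_halfLineMeasure ((integrable_heatPoissonKernel hs).comp_add_right a).integrableOn

lemma integral_heatPoissonKernel_halfLineMeasure (a : ℝ) (hs : 0 < s) :
    ∫ z, heatPoissonKernel (z + a) s ∂halfLineMeasure
      = 2 * heatKernel a s + heatPoissonKernel a s := by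
  have hf_int := (integrable_heatPoissonKernel_halfLineMeasure a hs).left_of_add_measure
  have hderiv (z : ℝ) : HasDerivAt (fun z => -2 * heatKernel (z + a) s)
      (heatPoissonKernel (z + a) s) z :=
    (((hasDerivAt_heatKernel (z + a) s).comp_add_const z a).const_mul (-2)).congr_deriv (by ring)
  have hlim : Tendsto (fun z => -2 * heatKernel (z + a) s) atTop (𝓝 0) := by
    simpa using ((tendsto_heatKernel_atTop hs).comp
      (tendsto_atTop_add_const_right _ a tendsto_id)).const_mul (-2)
  rw [integral_halfLineMeasure hf_int,
    integral_Ioi_of_hasDerivAt_of_tendsto' (fun z _ => hderiv z) hf_int hlim]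
  simp

lemma integrable_heatKernel_sub_heatKernel_halfLineMeasure (b : ℝ) (hs : 0 < s) :
    Integrable (fun z => heatKernel (z - b) s - heatKernel (z + b) s) halfLineMeasure :=
  integrable_halfLineMeasure (((integrable_heatKernel hs).comp_sub_right b).sub
    ((integrable_heatKernel hs).comp_add_right b)).integrableOn

lemma integral_heatKernel_sub_heatKernel_halfLineMeasure (b : ℝ) (hs : 0 < s) :
    ∫ z, (heatKernel (z - b) s - heatKernel (z + b) s) ∂halfLineMeasure = diffusedSign b s := by
  have hf_int := (integrable_heatKernel_sub_heatKernel_halfLineMeasure b hs).left_of_add_measure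
  have hderiv (c z : ℝ) : HasDerivAt (fun z => diffusedSign (z + c) s)
      (2 * heatKernel (z + c) s) z := by
    simpa using hasDerivAt_diffusedSign_comp ((hasDerivAt_id z).add_const c)
      (hasDerivAt_const z s) hs
  have hlim (c : ℝ) : Tendsto (fun z => diffusedSign (z + c) s) atTop (𝓝 1) :=
    (tendsto_diffusedSign_atTop hs).comp (tendsto_atTop_add_const_right _ c tendsto_id)
  rw [integral_halfLineMeasure hf_int, integral_Ioi_of_hasDerivAt_of_tendsto'
    (fun z _ => (((hderiv (-b) z).sub (hderiv b z)).div_const 2).congr_deriv (by ring_nf)) hf_int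
    (((hlim (-b)).sub (hlim b)).div_const 2)]
  simp only [Pi.sub_apply, zero_add, zero_sub, diffusedSign_neg, heatKernel_neg]
  ring

lemma hasDerivAt_diffusedSign_drift (b : ℝ) {t τ : ℝ} (hτ : τ < t) :
    HasDerivAt (fun τ => diffusedSign (b + τ) (t - τ))
      (2 * heatKernel (b + τ) (t - τ) + heatPoissonKernel (b + τ) (t - τ)) τ :=
  (hasDerivAt_diffusedSign_comp ((hasDerivAt_id τ).const_add b) ((hasDerivAt_id τ).const_sub t)
    (sub_pos.2 hτ)).congr_deriv (by simp)

lemma tendsto_diffusedSign_drift_nhdsGT (b : ℝ) {t : ℝ} (ht : 0 < t) :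
    Tendsto (fun τ => diffusedSign (b + τ) (t - τ)) (𝓝[>] 0) (𝓝 (diffusedSign b t)) := by
  simpa using (hasDerivAt_diffusedSign_drift b ht).continuousAt.tendsto.mono_left nhdsWithin_le_nhds

lemma tendsto_diffusedSign_drift_nhdsLT {b t : ℝ} (hbt : 0 < b + t) :
    Tendsto (fun τ => diffusedSign (b + τ) (t - τ)) (𝓝[<] t) (𝓝 1) := by
  refine tendsto_diffusedSign_of_pos hbt
    ((Continuous.tendsto (by fun_prop) t).mono_left nhdsWithin_le_nhds)
    (tendsto_nhdsWithin_iff.2 ⟨?_, ?_⟩)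
  · simpa using (Continuous.tendsto (f := fun τ => t - τ) (by fun_prop) t).mono_left
      nhdsWithin_le_nhds
  · filter_upwards [self_mem_nhdsWithin] with τ (hτ : τ < t) using sub_pos.2 hτ

lemma integrableOn_heatKernel_add_heatPoissonKernel_drift {b t : ℝ} (hb : 0 ≤ b) (ht : 0 < t) :
    IntegrableOn (fun τ => 2 * heatKernel (b + τ) (t - τ) + heatPoissonKernel (b + τ) (t - τ))
      (Ioo 0 t) :=
  integrableOn_Ioo_deriv_of_nonneg_of_tendsto
    (fun _ hτ => hasDerivAt_diffusedSign_drift b hτ.2)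
    (fun _ hτ => add_nonneg (mul_nonneg zero_le_two (heatKernel_nonneg _ _))
      (heatPoissonKernel_nonneg (add_nonneg hb hτ.1.le) (sub_pos.2 hτ.2).le))
    (tendsto_diffusedSign_drift_nhdsGT b ht)
    (tendsto_diffusedSign_drift_nhdsLT (add_pos_of_nonneg_of_pos hb ht))

lemma integral_heatKernel_add_heatPoissonKernel_drift {b t : ℝ} (hb : 0 ≤ b) (ht : 0 < t) :
    ∫ τ in Ioo 0 t, (2 * heatKernel (b + τ) (t - τ) + heatPoissonKernel (b + τ) (t - τ))
      = 1 - diffusedSign b t := by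
  rw [← integral_Ioc_eq_integral_Ioo, ← intervalIntegral.integral_of_le ht.le]
  exact intervalIntegral.integral_eq_sub_of_hasDerivAt_of_tendsto ht
    (fun _ hτ => hasDerivAt_diffusedSign_drift b hτ.2)
    ((intervalIntegrable_iff_integrableOn_Ioo_of_le ht.le).2
      (integrableOn_heatKernel_add_heatPoissonKernel_drift hb ht))
    (tendsto_diffusedSign_drift_nhdsGT b ht)
    (tendsto_diffusedSign_drift_nhdsLT (add_pos_of_nonneg_of_pos hb ht))

end NormalDirection

section GaussKernel

variable {N : ℕ} {s : ℝ}

lemma gauss_nonneg (x : Fin N → ℝ) (hs : 0 ≤ s) : 0 ≤ gauss N x s := by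
  unfold gauss; positivity

lemma gauss_eq_prod_heatKernel (x : Fin N → ℝ) (hs : 0 ≤ s) :
    gauss N x s = ∏ i, heatKernel (x i) s := by
  have hconst : (4 * π * s) ^ (-(N : ℝ) / 2) = (√(4 * π * s))⁻¹ ^ N := by
    rw [neg_div, Real.rpow_neg (by positivity), inv_pow, Real.sqrt_eq_rpow,
      ← Real.rpow_mul_natCast (by positivity), one_div_mul_eq_div]
  simp only [gauss, heatKernel, Finset.prod_mul_distrib, Finset.prod_const, Finset.card_univ,
    Fintype.card_fin, ← Real.exp_sum, ← Finset.sum_div, Finset.sum_neg_distrib, hconst]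

lemma gauss_snoc (x : Fin N → ℝ) (z : ℝ) (hs : 0 ≤ s) :
    gauss (N + 1) (Fin.snoc x z) s = heatKernel z s * gauss N x s := by
  simp only [gauss_eq_prod_heatKernel _ hs, Fin.prod_univ_castSucc, Fin.snoc_castSucc,
    Fin.snoc_last, mul_comm]

lemma integrable_gauss_sub (y : Fin N → ℝ) (hs : 0 < s) :
    Integrable fun x => gauss N (x - y) s := by
  have h : Integrable fun x => gauss N x s := by
    simp only [gauss_eq_prod_heatKernel _ hs.le]
    exact Integrable.fintype_prod fun _ => integrable_heatKernel hs
  exact h.comp_sub_right y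

lemma integral_gauss_sub (y : Fin N → ℝ) (hs : 0 < s) : ∫ x, gauss N (x - y) s = 1 := by
  rw [integral_sub_right_eq_self (fun x => gauss N x s)]
  simp only [gauss_eq_prod_heatKernel _ hs.le]
  rw [integral_fintype_prod_volume_eq_prod fun _ z => heatKernel z s]
  simp only [integral_heatKernel hs, Finset.prod_const_one]

end GaussKernel

section HalfSpace

lemma setIntegral_preimage_last {N : ℕ} {α E : Type*} [MeasureSpace α]
    [SigmaFinite (volume : Measure α)] [NormedAddCommGroup E] [NormedSpace ℝ E] (S : Set α)
    (f : (Fin (N + 1) → α) → E) :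
    ∫ x in {x : Fin (N + 1) → α | x (Fin.last N) ∈ S}, f x
      = ∫ p : α × (Fin N → α), f (Fin.snoc p.2 p.1) ∂(volume.restrict S).prod volume := by
  let e := (MeasurableEquiv.piFinSuccAbove (fun _ : Fin (N + 1) => α) (Fin.last N)).symm
  have he : MeasurePreserving e :=
    (volume_preserving_piFinSuccAbove (fun _ : Fin (N + 1) => α) (Fin.last N)).symm _
  have hsnoc (p : α × (Fin N → α)) : e p = Fin.snoc p.2 p.1 := by
    simp [e, MeasurableEquiv.piFinSuccAbove_symm_apply, Fin.snocEquiv]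
  have hset : e ⁻¹' {x | x (Fin.last N) ∈ S} = S ×ˢ univ := by
    ext p
    simp [hsnoc]
  rw [← he.setIntegral_preimage_emb e.measurableEmbedding, hset, Measure.volume_eq_prod,
    ← Measure.prod_restrict, Measure.restrict_univ]
  simp only [hsnoc]

lemma setIntegral_halfSpace_add_integral_boundary {N : ℕ} {E : Type*} [NormedAddCommGroup E]
    [NormedSpace ℝ E] {f : (Fin (N + 1) → ℝ) → E}
    (hf : Integrable (fun p : ℝ × (Fin N → ℝ) => f (Fin.snoc p.2 p.1))
      (halfLineMeasure.prod volume)) :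
    (∫ x in {x : Fin (N + 1) → ℝ | 0 < x (Fin.last N)}, f x)
        + ∫ x' : Fin N → ℝ, f (Fin.snoc x' 0)
      = ∫ p : ℝ × (Fin N → ℝ), f (Fin.snoc p.2 p.1) ∂halfLineMeasure.prod volume := by
  have hsplit : halfLineMeasure.prod (volume : Measure (Fin N → ℝ))
      = (volume.restrict (Ioi 0)).prod volume + volume.map (Prod.mk 0) := by
    rw [Measure.add_prod, Measure.dirac_prod]
  rw [hsplit] at hf ⊢
  have hf_int := integrable_add_measure.1 hf
  rw [integral_add_measure hf_int.1 hf_int.2,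
    integral_map measurable_prodMk_left.aemeasurable hf_int.2.aestronglyMeasurable,
    ← setIntegral_preimage_last (Ioi 0) f]
  rfl

end HalfSpace

section FundamentalSolution

variable {N : ℕ} {b t τ : ℝ}

/-- The integrand of `Hexp` at time `τ`, in the coordinates `p = (x_N, x')` and for `y = (y', b)`:
the boundary drift shifts the normal coordinate by `τ`. -/
noncomputable def driftPoissonKernel (y' : Fin N → ℝ) (b t τ : ℝ) (p : ℝ × (Fin N → ℝ)) : ℝ :=
  heatPoissonKernel (p.1 + (b + τ)) (t - τ) * gauss N (p.2 - y') (t - τ)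

lemma measurable_uncurry_driftPoissonKernel (y' : Fin N → ℝ) (b t : ℝ) :
    Measurable (Function.uncurry (driftPoissonKernel y' b t)) := by
  unfold Function.uncurry driftPoissonKernel heatPoissonKernel heatKernel gauss
  simp only [Pi.sub_apply]
  fun_prop

lemma driftPoissonKernel_nonneg (y' : Fin N → ℝ) {p : ℝ × (Fin N → ℝ)} (hp : 0 ≤ p.1 + (b + τ))
    (hτ : τ ≤ t) : 0 ≤ driftPoissonKernel y' b t τ p :=
  mul_nonneg (heatPoissonKernel_nonneg hp (sub_nonneg.2 hτ)) (gauss_nonneg _ (sub_nonneg.2 hτ))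

lemma integrable_driftPoissonKernel (y' : Fin N → ℝ) (b : ℝ) (hτ : τ < t) :
    Integrable (driftPoissonKernel y' b t τ) (halfLineMeasure.prod volume) :=
  (integrable_heatPoissonKernel_halfLineMeasure _ (sub_pos.2 hτ)).mul_prod
    (integrable_gauss_sub y' (sub_pos.2 hτ))

lemma integral_driftPoissonKernel (y' : Fin N → ℝ) (b : ℝ) (hτ : τ < t) :
    ∫ p, driftPoissonKernel y' b t τ p ∂halfLineMeasure.prod volume
      = 2 * heatKernel (b + τ) (t - τ) + heatPoissonKernel (b + τ) (t - τ) := by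
  unfold driftPoissonKernel
  rw [integral_prod_mul (fun z => heatPoissonKernel (z + (b + τ)) (t - τ))
      fun x' => gauss N (x' - y') (t - τ),
    integral_heatPoissonKernel_halfLineMeasure _ (sub_pos.2 hτ),
    integral_gauss_sub y' (sub_pos.2 hτ), mul_one]

lemma integrable_uncurry_driftPoissonKernel (y' : Fin N → ℝ) (hb : 0 ≤ b) (ht : 0 < t) :
    Integrable (Function.uncurry (driftPoissonKernel y' b t))
      ((volume.restrict (Ioo 0 t)).prod (halfLineMeasure.prod volume)) := by
  refine integrable_uncurry_of_nonneg
    (measurable_uncurry_driftPoissonKernel y' b t).aestronglyMeasurable ?_ ?_ ?_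
  · filter_upwards [ae_restrict_mem measurableSet_Ioo] with τ hτ
    filter_upwards [Measure.quasiMeasurePreserving_fst.ae ae_halfLineMeasure_nonneg] with p hp
    exact driftPoissonKernel_nonneg y' (add_nonneg hp (add_nonneg hb hτ.1.le)) hτ.2.le
  · filter_upwards [ae_restrict_mem measurableSet_Ioo] with τ hτ
    exact integrable_driftPoissonKernel y' b hτ.2
  · exact (integrableOn_heatKernel_add_heatPoissonKernel_drift hb ht).congr_fun
      (fun τ hτ => (integral_driftPoissonKernel y' b hτ.2).symm) measurableSet_Ioo

lemma integrable_integral_driftPoissonKernel (y' : Fin N → ℝ) (hb : 0 ≤ b) (ht : 0 < t) :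
    Integrable (fun p => ∫ τ in Ioo 0 t, driftPoissonKernel y' b t τ p)
      (halfLineMeasure.prod volume) :=
  (integrable_uncurry_driftPoissonKernel y' hb ht).integral_prod_right

lemma integral_integral_driftPoissonKernel (y' : Fin N → ℝ) (hb : 0 ≤ b) (ht : 0 < t) :
    ∫ p, (∫ τ in Ioo 0 t, driftPoissonKernel y' b t τ p) ∂halfLineMeasure.prod volume
      = 1 - diffusedSign b t := by
  rw [← integral_integral_swap (integrable_uncurry_driftPoissonKernel y' hb ht),
    ← integral_heatKernel_add_heatPoissonKernel_drift hb ht]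
  exact setIntegral_congr_fun measurableSet_Ioo fun τ hτ => integral_driftPoissonKernel y' b hτ.2

lemma Hexp_snoc (x' y' : Fin N → ℝ) (z b : ℝ) (ht : 0 ≤ t) :
    Hexp N (Fin.snoc x' z) (Fin.snoc y' b) t
      = ∫ τ in Ioo 0 t, driftPoissonKernel y' b t τ (z, x') := by
  rw [Hexp, intervalIntegral.integral_of_le ht, integral_Ioc_eq_integral_Ioo]
  refine setIntegral_congr_fun measurableSet_Ioo fun τ hτ => ?_
  have hshift : (fun i => (Fin.snoc x' z : Fin (N + 1) → ℝ) i - ystar N (Fin.snoc y' b) i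
      + τ * eN N i) = Fin.snoc (x' - y') (z + (b + τ)) := by
    ext i
    refine Fin.lastCases ?_ (fun i => ?_) i
    · simp [ystar, eN, add_assoc]
    · simp [ystar, eN, (Fin.castSucc_lt_last i).ne]
  have hgauss := gauss_snoc (x' - y') (z + (b + τ)) (sub_pos.2 hτ.2).le
  rw [← hshift, gauss] at hgauss
  push_cast at hgauss
  simp only [driftPoissonKernel, heatPoissonKernel, Fin.snoc_last]
  rw [mul_right_comm, hgauss, add_assoc]
  ring

lemma integrable_heatKernel_sub_heatKernel_mul_gauss (y' : Fin N → ℝ) (b : ℝ) (ht : 0 < t) :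
    Integrable (fun p : ℝ × (Fin N → ℝ) =>
      (heatKernel (p.1 - b) t - heatKernel (p.1 + b) t) * gauss N (p.2 - y') t)
      (halfLineMeasure.prod volume) :=
  (integrable_heatKernel_sub_heatKernel_halfLineMeasure b ht).mul_prod (integrable_gauss_sub y' ht)

lemma integral_heatKernel_sub_heatKernel_mul_gauss (y' : Fin N → ℝ) (b : ℝ) (ht : 0 < t) :
    ∫ p : ℝ × (Fin N → ℝ), (heatKernel (p.1 - b) t - heatKernel (p.1 + b) t)
      * gauss N (p.2 - y') t ∂halfLineMeasure.prod volume = diffusedSign b t := by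
  rw [integral_prod_mul (fun z => heatKernel (z - b) t - heatKernel (z + b) t)
      fun x' => gauss N (x' - y') t,
    integral_heatKernel_sub_heatKernel_halfLineMeasure b ht, integral_gauss_sub y' ht, mul_one]

lemma gauss_sub_gauss_ystar_snoc (x' y' : Fin N → ℝ) (z b : ℝ) (ht : 0 ≤ t) :
    gauss (N + 1) (Fin.snoc x' z - Fin.snoc y' b) t
        - gauss (N + 1) (Fin.snoc x' z - ystar N (Fin.snoc y' b)) t
      = (heatKernel (z - b) t - heatKernel (z + b) t) * gauss N (x' - y') t := by
  have hsub (c : ℝ) : (Fin.snoc x' z - Fin.snoc y' c : Fin (N + 1) → ℝ)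
      = Fin.snoc (x' - y') (z - c) := by
    ext i
    refine Fin.lastCases ?_ (fun i => ?_) i <;> simp
  have hstar : ystar N (Fin.snoc y' b) = Fin.snoc y' (-b) := by
    rw [ystar, Fin.update_snoc_last, Fin.snoc_last]
  rw [hstar, hsub, hsub, gauss_snoc _ _ ht, gauss_snoc _ _ ht, sub_neg_eq_add, sub_mul]

lemma Gker_snoc (p : ℝ × (Fin N → ℝ)) (y' : Fin N → ℝ) (b : ℝ) (ht : 0 ≤ t) :
    Gker N (Fin.snoc p.2 p.1) (Fin.snoc y' b) t
      = (heatKernel (p.1 - b) t - heatKernel (p.1 + b) t) * gauss N (p.2 - y') t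
        + ∫ τ in Ioo 0 t, driftPoissonKernel y' b t τ p := by
  rw [Gker, gauss_sub_gauss_ystar_snoc _ _ _ _ ht, Hexp_snoc _ _ _ _ ht]

lemma integrable_Gker_snoc (y' : Fin N → ℝ) (hb : 0 ≤ b) (ht : 0 < t) :
    Integrable (fun p : ℝ × (Fin N → ℝ) => Gker N (Fin.snoc p.2 p.1) (Fin.snoc y' b) t)
      (halfLineMeasure.prod volume) := by
  simp only [Gker_snoc _ _ _ ht.le]
  exact (integrable_heatKernel_sub_heatKernel_mul_gauss y' b ht).add
    (integrable_integral_driftPoissonKernel y' hb ht)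

lemma integral_Gker_snoc (y' : Fin N → ℝ) (hb : 0 ≤ b) (ht : 0 < t) :
    ∫ p : ℝ × (Fin N → ℝ), Gker N (Fin.snoc p.2 p.1) (Fin.snoc y' b) t
      ∂halfLineMeasure.prod volume = 1 := by
  simp only [Gker_snoc _ _ _ ht.le]
  rw [integral_add (integrable_heatKernel_sub_heatKernel_mul_gauss y' b ht)
      (integrable_integral_driftPoissonKernel y' hb ht),
    integral_heatKernel_sub_heatKernel_mul_gauss y' b ht,
    integral_integral_driftPoissonKernel y' hb ht, add_sub_cancel]

end FundamentalSolution

/-- Mass identity: `∫_Ω G(x,y,t) dx + ∫_{∂Ω} G(x,y,t) dσ(x) = 1` for every `y` in the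
closed upper half-space and `t > 0` (dimension is `N+1 ≥ 1`). -/
theorem stmt_5 (N : ℕ) (y : Fin (N + 1) → ℝ) (hy : 0 ≤ y (Fin.last N)) (t : ℝ) (ht : 0 < t) :
    (∫ x in {x : Fin (N + 1) → ℝ | 0 < x (Fin.last N)}, Gker N x y t)
      + (∫ x' : Fin N → ℝ, Gker N (Fin.snoc x' 0) y t) = 1 := by
  obtain ⟨y', b, rfl⟩ : ∃ y' b, y = Fin.snoc y' b := ⟨_, _, (Fin.snoc_init_self y).symm⟩
  rw [Fin.snoc_last] at hy
  rw [← integral_Gker_snoc y' hy ht]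
  exact setIntegral_halfSpace_add_integral_boundary (integrable_Gker_snoc y' hy ht)
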